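/- For all integers m ≥ 0 and l ∈ ℤ, one has S̃_{m+1,l}(q) = q^{−l} S_{m,l+1}(q) + S_{m,l}(q) + q^{−m+l−1} S̃_{m,l−1}(q), an identity in ℤ[q, q⁻¹]. -/

import Mathlib

/-!
Two applications of the dual `q`-Pascal rule `C(n+1,k) = C(n,k) + q^(n+1-k) C(n,k-1)` split the
`ν`-th summand of `S̃_{m+1,l}`. Applied to `C(m+1,ν)`, the rule produces a part with `C(m,ν)`,
which is the `ν`-th summand of `q^(-m+l-1) S̃_{m,l-1}`, and a part with `C(m,ν-1) C(ν,m+1-l-ν)`.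
Applied to the second binomial of the latter, it produces the `(ν-1)`-st summands of `S_{m,l}` and
`q^(-l) S_{m,l+1}`. With `k` ranging over all integers, the dual rule follows from the defining one
by an induction on `n` that has no boundary cases in `k`.
-/

open LaurentPolynomial

/-- The Gaussian (q-)binomial coefficient `C(n,k)_q` as a Laurent polynomial in `q`,
defined by the q-Pascal recursion `C(n+1,k+1)_q = C(n,k)_q + q^(k+1) C(n,k+1)_q`. -/
noncomputable def qbinom : ℕ → ℕ → LaurentPolynomial ℤ
  | _, 0 => 1
  | 0, _ + 1 => 0
  | n + 1, k + 1 => qbinom n k + T ((k : ℤ) + 1) * qbinom n (k + 1)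

/-- `C(n,k)_q` for integer arguments, zero unless `0 ≤ k ≤ n`. -/
noncomputable def qbinomZ (n k : ℤ) : LaurentPolynomial ℤ :=
  if 0 ≤ k ∧ k ≤ n then qbinom n.toNat k.toNat else 0

/-- `S_{m,l}(q) = Σ_{ν∈ℤ} q^{(ν+l−m)(ν+l)+ν(ν−m)} C(m,ν)_q C(ν, m−l−ν)_q`. -/
noncomputable def Sq (m : ℕ) (l : ℤ) : LaurentPolynomial ℤ :=
  ∑ᶠ ν : ℤ,
    T ((ν + l - m) * (ν + l) + ν * (ν - m)) * (qbinomZ m ν * qbinomZ ν (m - l - ν))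

/-- `S̃_{m,l}(q) = Σ_{ν∈ℤ} q^{(ν+l−m)(ν+l−1)+ν(ν−m)} C(m,ν)_q C(ν, m−l−ν)_q`. -/
noncomputable def Sqt (m : ℕ) (l : ℤ) : LaurentPolynomial ℤ :=
  ∑ᶠ ν : ℤ,
    T ((ν + l - m) * (ν + l - 1) + ν * (ν - m)) * (qbinomZ m ν * qbinomZ ν (m - l - ν))

theorem qbinom_zero_right (n : ℕ) : qbinom n 0 = 1 := by
  rw [qbinom]

theorem qbinom_succ_succ (n k : ℕ) :
    qbinom (n + 1) (k + 1) = qbinom n k + T ((k : ℤ) + 1) * qbinom n (k + 1) := by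
  rw [qbinom]

theorem qbinom_eq_zero_of_lt {n k : ℕ} (h : n < k) : qbinom n k = 0 := by
  induction n generalizing k with
  | zero =>
    obtain ⟨k, rfl⟩ := Nat.exists_eq_add_one.mpr h
    rw [qbinom]
  | succ n ih =>
    obtain ⟨k, rfl⟩ := Nat.exists_eq_add_one.mpr (Nat.zero_lt_of_lt h)
    rw [qbinom_succ_succ, ih (by omega), ih (by omega), mul_zero, add_zero]

theorem qbinomZ_natCast (n k : ℕ) : qbinomZ n k = qbinom n k := by
  rcases le_or_gt k n with h | h
  · simp [qbinomZ, h]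
  · simp [qbinomZ, h.not_ge, qbinom_eq_zero_of_lt h]

theorem qbinomZ_of_neg {k : ℤ} (n : ℤ) (hk : k < 0) : qbinomZ n k = 0 :=
  if_neg fun h => hk.not_ge h.1

theorem qbinomZ_zero_left (k : ℤ) : qbinomZ 0 k = if k = 0 then 1 else 0 := by
  rcases eq_or_ne k 0 with rfl | hk
  · simp [qbinomZ, qbinom_zero_right]
  · rw [if_neg hk]
    exact if_neg fun h => hk (le_antisymm h.2 h.1)

theorem hasFiniteSupport_qbinomZ (n : ℤ) : (qbinomZ n).HasFiniteSupport :=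
  (Set.finite_Icc 0 n).subset fun _ hk => of_not_not fun h => hk (if_neg h)

theorem qbinomZ_pascal {n : ℤ} (hn : 0 ≤ n) (k : ℤ) :
    qbinomZ (n + 1) k = qbinomZ n (k - 1) + T k * qbinomZ n k := by
  lift n to ℕ using hn
  rw [← Nat.cast_succ]
  rcases lt_or_ge k 0 with hk | hk
  · simp [qbinomZ_of_neg _ hk, qbinomZ_of_neg _ (show k - 1 < 0 by omega)]
  lift k to ℕ using hk
  cases k with
  | zero =>
    rw [qbinomZ_natCast, qbinomZ_natCast, qbinomZ_of_neg n (by simp)]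
    simp [qbinom_zero_right]
  | succ k =>
    rw [Nat.cast_succ k, add_sub_cancel_right, ← Nat.cast_succ k]
    simp only [qbinomZ_natCast]
    exact_mod_cast qbinom_succ_succ n k

theorem qbinomZ_pascal_dual {n : ℤ} (hn : 0 ≤ n) (k : ℤ) :
    qbinomZ (n + 1) k = qbinomZ n k + T (n + 1 - k) * qbinomZ n (k - 1) := by
  induction n, hn using Int.leInduction generalizing k with
  | base =>
    rw [qbinomZ_pascal le_rfl, qbinomZ_zero_left, qbinomZ_zero_left]
    rcases eq_or_ne k 0 with rfl | hk0
    · simp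
    rcases eq_or_ne k 1 with rfl | hk1
    · simp
    · simp [hk0, sub_ne_zero.mpr hk1]
  | succ n hn ih =>
    have hT : (T k * T (n + 1 - k) : LaurentPolynomial ℤ) = T (n + 1 + 1 - k) * T (k - 1) := by
      rw [← T_add, ← T_add]
      ring_nf
    calc qbinomZ (n + 1 + 1) k
        = qbinomZ (n + 1) (k - 1) + T k * qbinomZ (n + 1) k := qbinomZ_pascal (by omega) k
      _ = qbinomZ n (k - 1) + T (n + 1 - (k - 1)) * qbinomZ n (k - 1 - 1)
            + T k * (qbinomZ n k + T (n + 1 - k) * qbinomZ n (k - 1)) := by rw [ih, ih]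
      _ = qbinomZ n (k - 1) + T k * qbinomZ n k
            + T (n + 1 + 1 - k) * (qbinomZ n (k - 1 - 1) + T (k - 1) * qbinomZ n (k - 1)) := by
        rw [show n + 1 - (k - 1) = n + 1 + 1 - k by ring]
        linear_combination qbinomZ n (k - 1) * hT
      _ = qbinomZ (n + 1) k + T (n + 1 + 1 - k) * qbinomZ (n + 1) (k - 1) := by
        rw [← qbinomZ_pascal hn, ← qbinomZ_pascal hn]

/-- The `ν`-th summand of `S_{m,l}`, with `m` an integer to avoid casts. -/
noncomputable def sqTerm (m l ν : ℤ) : LaurentPolynomial ℤ :=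
  T ((ν + l - m) * (ν + l) + ν * (ν - m)) * (qbinomZ m ν * qbinomZ ν (m - l - ν))

/-- The `ν`-th summand of `S̃_{m,l}`, with `m` an integer to avoid casts. -/
noncomputable def sqtTerm (m l ν : ℤ) : LaurentPolynomial ℤ :=
  T ((ν + l - m) * (ν + l - 1) + ν * (ν - m)) * (qbinomZ m ν * qbinomZ ν (m - l - ν))

theorem Sq_eq_finsum_sqTerm (m : ℕ) (l : ℤ) : Sq m l = ∑ᶠ ν, sqTerm m l ν := rfl

theorem Sqt_eq_finsum_sqtTerm (m : ℕ) (l : ℤ) : Sqt m l = ∑ᶠ ν, sqtTerm m l ν := rfl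

theorem hasFiniteSupport_sqTerm (m l : ℤ) : (sqTerm m l).HasFiniteSupport :=
  ((hasFiniteSupport_qbinomZ m).mul_left _).mul_right _

theorem hasFiniteSupport_sqtTerm (m l : ℤ) : (sqtTerm m l).HasFiniteSupport :=
  ((hasFiniteSupport_qbinomZ m).mul_left _).mul_right _

theorem T_mul_qbinomZ_mul_qbinomZ_add_one (m l μ : ℤ) :
    T ((μ + l - m) * (μ + l) + μ * (μ - m)) * (qbinomZ m μ * qbinomZ (μ + 1) (m - l - μ)) =
      T (-l) * sqTerm m (l + 1) μ + sqTerm m l μ := by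
  rcases lt_or_ge μ 0 with hμ | hμ
  · simp [sqTerm, qbinomZ_of_neg m hμ]
  have hT : (T (-l) * T ((μ + (l + 1) - m) * (μ + (l + 1)) + μ * (μ - m)) : LaurentPolynomial ℤ) =
      T ((μ + l - m) * (μ + l) + μ * (μ - m)) * T (μ + 1 - (m - l - μ)) := by
    rw [← T_add, ← T_add]
    ring_nf
  rw [qbinomZ_pascal_dual hμ, sqTerm, sqTerm, show m - (l + 1) - μ = m - l - μ - 1 by ring]
  linear_combination -(qbinomZ m μ * qbinomZ μ (m - l - μ - 1)) * hT

theorem sqtTerm_add_one {m : ℤ} (hm : 0 ≤ m) (l ν : ℤ) :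
    sqtTerm (m + 1) l ν = T (-l) * sqTerm m (l + 1) (ν - 1) + sqTerm m l (ν - 1) +
      T (-m + l - 1) * sqtTerm m (l - 1) ν := by
  have hT₀ : (T (-m + l - 1) * T ((ν + (l - 1) - m) * (ν + (l - 1) - 1) + ν * (ν - m)) :
      LaurentPolynomial ℤ) = T ((ν + l - (m + 1)) * (ν + l - 1) + ν * (ν - (m + 1))) := by
    rw [← T_add]
    ring_nf
  have hT₁ : (T ((ν - 1 + l - m) * (ν - 1 + l) + (ν - 1) * (ν - 1 - m)) : LaurentPolynomial ℤ) =
      T ((ν + l - (m + 1)) * (ν + l - 1) + ν * (ν - (m + 1))) * T (m + 1 - ν) := by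
    rw [← T_add]
    ring_nf
  rw [← T_mul_qbinomZ_mul_qbinomZ_add_one, sqtTerm, sqtTerm, qbinomZ_pascal_dual hm,
    sub_add_cancel, show m - (l - 1) - ν = m + 1 - l - ν by ring,
    show m - l - (ν - 1) = m + 1 - l - ν by ring]
  linear_combination -(qbinomZ m ν * qbinomZ ν (m + 1 - l - ν)) * hT₀
    - (qbinomZ m (ν - 1) * qbinomZ ν (m + 1 - l - ν)) * hT₁

/-- St_{m+1,l} = q^{-l} S_{m,l+1} + S_{m,l} + q^{-m+l-1} St_{m,l-1}. -/
theorem St_succ_rec1 (m : ℕ) (l : ℤ) :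
    Sqt (m + 1) l =
      T (-l) * Sq m (l + 1) + Sq m l + T (-(m : ℤ) + l - 1) * Sqt m (l - 1) := by
  have hfin (j : ℤ) : (fun ν => sqTerm m j (ν - 1)).HasFiniteSupport :=
    .fun_comp_of_injective (f := sqTerm m j) sub_left_injective (hasFiniteSupport_sqTerm m j)
  have hshift (j : ℤ) : ∑ᶠ ν, sqTerm m j (ν - 1) = Sq m j :=
    (finsum_comp_equiv (Equiv.subRight 1)).trans (Sq_eq_finsum_sqTerm m j).symm
  calc Sqt (m + 1) l
      = ∑ᶠ ν, sqtTerm (m + 1) l ν := by rw [Sqt_eq_finsum_sqtTerm, Nat.cast_succ]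
    _ = ∑ᶠ ν, (T (-l) * sqTerm m (l + 1) (ν - 1) + sqTerm m l (ν - 1) +
          T (-(m : ℤ) + l - 1) * sqtTerm m (l - 1) ν) :=
      finsum_congr (sqtTerm_add_one m.cast_nonneg l)
    _ = ∑ᶠ ν, T (-l) * sqTerm m (l + 1) (ν - 1) + ∑ᶠ ν, sqTerm m l (ν - 1) +
          ∑ᶠ ν, T (-(m : ℤ) + l - 1) * sqtTerm m (l - 1) ν := by
      have hfin₁ := (hfin (l + 1)).fun_mul_right fun _ => T (-l)
      have hfin₂ := (hasFiniteSupport_sqtTerm m (l - 1)).fun_mul_right fun _ => T (-(m : ℤ) + l - 1)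
      rw [finsum_add_distrib (hfin₁.fun_add (hfin l)) hfin₂, finsum_add_distrib hfin₁ (hfin l)]
    _ = T (-l) * Sq m (l + 1) + Sq m l + T (-(m : ℤ) + l - 1) * Sqt m (l - 1) := by
      rw [← mul_finsum, ← mul_finsum, hshift, hshift, Sqt_eq_finsum_sqtTerm]
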